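/- Let M = M_n(ℂ) be the C*-algebra of n×n complex matrices (n ≥ 1) and let ψ ∈ M* satisfy ψ* = -ψ. Then the map x ↦ D_ψ(x*) from M to M* is an inner triple derivation, i.e., there exist finitely many b_j ∈ M and φ_j ∈ M* such that D_ψ∘* = Σ_j (L(b_j,φ_j) - L(φ_j,b_j)). -/

import Mathlib

noncomputable section

/-- The C*-algebra of `n×n` complex matrices (with conjugate-transpose involution). -/
abbrev Mat (n : ℕ) := Matrix (Fin n) (Fin n) ℂ

variable {n : ℕ}

/-- The triple product `{a,b,c} = (a b* c + c b* a)/2`. -/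
def tp (a b c : Mat n) : Mat n := (2 : ℂ)⁻¹ • (a * star b * c + c * star b * a)

/-- The module triple product `{a,b,φ} = {φ,b,a}`, given by `x ↦ φ({b,a,x})`. -/
def tOut (a b : Mat n) (φ : Mat n → ℂ) : Mat n → ℂ := fun x => φ (tp b a x)

/-- The module triple product `{a,φ,b}`, given by `x ↦ conj (φ ({a,x,b}))`. -/
def tMid (a : Mat n) (φ : Mat n → ℂ) (b : Mat n) : Mat n → ℂ :=
  fun x => starRingEnd ℂ (φ (tp a x b))

/-- The adjoint functional `φ*(x) = conj (φ (x*))`. -/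
def fstar (φ : Mat n → ℂ) : Mat n → ℂ := fun x => starRingEnd ℂ (φ (star x))

/-- The inner binary derivation `D_ψ(x) = ψ·x - x·ψ`, so `D_ψ(x)(y) = ψ(x y - y x)`. -/
def Dd (ψ : Mat n → ℂ) (x : Mat n) : Mat n → ℂ := fun y => ψ (x * y - y * x)

/-!
With the Lie action of `M` on its dual, `⁅b, φ⁆ = b·φ - φ·b` and `D_ψ(x)(y) = ψ ⁅x, y⁆`. Put
`δ(b,φ) = L(b,φ) - L(φ,b)` and `χ = ⁅b, φ⁆`. Since `⁅b*, φ*⁆ = -χ*`, expanding the triple products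
gives `(δ(b,φ) + δ(b*,φ*))(x)(y) = ½ (χ - χ*) ⁅x*, y⁆`, so `D_ψ∘*` is an inner triple derivation
as soon as the skew functional `ψ` agrees on commutators with a sum of functionals `⁅b, φ⁆`.

In terms of the matrix units, `∑ e_ij e_ji = n` and `∑ e_ij y e_ji = tr(y) 1`, which dualize to
`∑ ⁅e_ji, ψ·e_ij⁆ = ψ(1) tr - n ψ`. Since the trace vanishes on commutators, `ψ` agrees there with
`-n⁻¹ ∑ ⁅e_ji, ψ·e_ij⁆`.
-/

attribute [local instance] LieRing.ofAssociativeRing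

section MatrixUnits

open Matrix

variable {m R : Type*} [Fintype m] [DecidableEq m]

theorem sum_single_mul_mul_single [Semiring R] (y : Matrix m m R) :
    ∑ p : m × m, single p.1 p.2 1 * y * single p.2 p.1 1 = y.trace • 1 := by
  simp only [single_mul_mul_single, one_mul, mul_one, Fintype.sum_prod_type_right,
    sum_single_eq_diagonal, ← smul_one_eq_diagonal, ← Finset.sum_smul, trace, diag_apply]

theorem sum_single_mul_single [NonAssocSemiring R] :
    ∑ p : m × m, single p.1 p.2 1 * single p.2 p.1 1 = (Fintype.card m : Matrix m m R) := by
  simp only [single_mul_single_same, mul_one, Fintype.sum_prod_type, Finset.sum_const,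
    Finset.card_univ, ← Finset.smul_sum, sum_single_one, nsmul_one]

theorem sum_single_mul_lie_single [Ring R] (y : Matrix m m R) :
    ∑ p : m × m, single p.1 p.2 1 * ⁅single p.2 p.1 (1 : R), y⁆ =
      Fintype.card m • y - y.trace • 1 := by
  simp only [Ring.lie_def, mul_sub, ← mul_assoc, Finset.sum_sub_distrib, ← Finset.sum_mul,
    sum_single_mul_single, sum_single_mul_mul_single, nsmul_eq_mul]

theorem sum_lie_single_comp_mulLeft [CommRing R] (ψ : Module.Dual R (Matrix m m R)) :
    ∑ p : m × m, ⁅single p.2 p.1 (1 : R), ψ ∘ₗ LinearMap.mulLeft R (single p.1 p.2 (1 : R))⁆ =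
      ψ 1 • traceLinearMap m R R - Fintype.card m • ψ := by
  ext1 y
  calc
    _ = -ψ (∑ p : m × m, single p.1 p.2 1 * ⁅single p.2 p.1 (1 : R), y⁆) := by simp
    _ = -ψ (Fintype.card m • y - y.trace • 1) := by rw [sum_single_mul_lie_single]
    _ = _ := by simp [mul_comm, -nsmul_eq_mul]

theorem sum_lie_single_comp_mulLeft_apply_lie [CommRing R] (ψ : Module.Dual R (Matrix m m R))
    (x y : Matrix m m R) :
    ∑ p : m × m,
        ⁅single p.2 p.1 (1 : R), ψ ∘ₗ LinearMap.mulLeft R (single p.1 p.2 (1 : R))⁆ ⁅x, y⁆ =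
      -(Fintype.card m • ψ ⁅x, y⁆) := by
  rw [← LinearMap.sum_apply, sum_lie_single_comp_mulLeft]
  simp

end MatrixUnits

section DualAdjoint

open WithConv

variable {R A : Type*}

section Module

variable [CommSemiring R] [StarRing R] [AddCommMonoid A] [StarAddMonoid A] [Module R A]
  [StarModule R A]

/-- The adjoint functional `φ*(x) = (φ (x*))*` as an element of the dual module. It is Mathlib's
intrinsic star with the `WithConv` type synonym stripped off. -/
def dualAdjoint (φ : Module.Dual R A) : Module.Dual R A :=
  (star (toConv φ)).ofConv

@[simp]
theorem dualAdjoint_apply (φ : Module.Dual R A) (x : A) : dualAdjoint φ x = star (φ (star x)) :=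
  rfl

@[simp]
theorem dualAdjoint_dualAdjoint (φ : Module.Dual R A) : dualAdjoint (dualAdjoint φ) = φ := by
  ext x
  simp

end Module

theorem star_lie [NonUnitalNonAssocRing A] [StarRing A] (x y : A) :
    star ⁅x, y⁆ = -⁅star x, star y⁆ := by
  simp [Ring.lie_def]

theorem lie_star_dualAdjoint [CommRing R] [StarRing R] [Ring A] [StarRing A] [Algebra R A]
    [StarModule R A] (b : A) (φ : Module.Dual R A) :
    ⁅star b, dualAdjoint φ⁆ = -dualAdjoint ⁅b, φ⁆ := by
  ext x
  simp [star_lie, ← star_neg, ← map_neg]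

end DualAdjoint

theorem Dd_apply (ψ : Mat n → ℂ) (x y : Mat n) : Dd ψ x y = ψ ⁅x, y⁆ :=
  rfl

/-- The elementary inner triple derivation `L(b,φ) - L(φ,b) : M → M*`, with values in the space of
all functions `M → ℂ` (like `tMid` and `tOut`) because `{b,φ,x}` is not bundled as a linear map. -/
def tripleCommutator (b : Mat n) (φ : Module.Dual ℂ (Mat n)) : Mat n → Mat n → ℂ :=
  fun x => tMid b φ x - tOut x b φ

/-- The inner triple derivations `M → M*`: the finite sums of maps `L(b,φ) - L(φ,b)`, encoded as
an additive submonoid. -/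
def innerTripleDerivations (n : ℕ) : AddSubmonoid (Mat n → Mat n → ℂ) :=
  AddSubmonoid.closure (Set.range fun p : Mat n × Module.Dual ℂ (Mat n) => tripleCommutator p.1 p.2)

theorem tripleCommutator_mem_innerTripleDerivations (b : Mat n) (φ : Module.Dual ℂ (Mat n)) :
    tripleCommutator b φ ∈ innerTripleDerivations n :=
  AddSubmonoid.subset_closure ⟨(b, φ), rfl⟩

theorem exists_sum_of_mem_innerTripleDerivations {T : Mat n → Mat n → ℂ}
    (hT : T ∈ innerTripleDerivations n) :
    ∃ (m : ℕ) (b : Fin m → Mat n) (φ : Fin m → Module.Dual ℂ (Mat n)),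
      T = ∑ i, tripleCommutator (b i) (φ i) := by
  obtain ⟨l, hl, rfl⟩ := AddSubmonoid.exists_list_of_mem_closure hT
  choose p hp using fun i : Fin l.length => hl l[i] (List.getElem_mem i.2)
  refine ⟨l.length, fun i => (p i).1, fun i => (p i).2, ?_⟩
  simp [hp]

theorem tripleCommutator_apply (b x y : Mat n) (φ : Module.Dual ℂ (Mat n)) :
    tripleCommutator b φ x y =
      2⁻¹ * (dualAdjoint φ (star x * y * star b + star b * y * star x) -
        φ (b * star x * y + y * star x * b)) := by
  simp [map_inv₀, map_ofNat, tripleCommutator, tMid, tOut, tp, mul_assoc, mul_add,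
    mul_sub, add_comm]

theorem tripleCommutator_add_star_apply (b x y : Mat n) (φ : Module.Dual ℂ (Mat n)) :
    tripleCommutator b φ x y + tripleCommutator (star b) (dualAdjoint φ) x y =
      2⁻¹ * (⁅b, φ⁆ - dualAdjoint ⁅b, φ⁆) ⁅star x, y⁆ := by
  rw [← neg_neg (dualAdjoint ⁅b, φ⁆), ← lie_star_dualAdjoint]
  simp only [tripleCommutator_apply, dualAdjoint_dualAdjoint, star_star, LinearMap.sub_apply,
    LinearMap.neg_apply, Module.Dual.lie_apply, Ring.lie_def, mul_sub, map_sub, map_add,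
    mul_assoc]
  ring

theorem Dd_star_mem_innerTripleDerivations_of_sum_lie_eq {ι : Type*} [Fintype ι] {b : ι → Mat n}
    {φ : ι → Module.Dual ℂ (Mat n)} {ψ : Module.Dual ℂ (Mat n)} (hψ : fstar ψ = -ψ)
    (h : ∀ x y : Mat n, ∑ i, ⁅b i, φ i⁆ ⁅x, y⁆ = ψ ⁅x, y⁆) :
    (fun x => Dd ψ (star x)) ∈ innerTripleDerivations n := by
  have hψ' (x y : Mat n) : ∑ i, dualAdjoint ⁅b i, φ i⁆ ⁅x, y⁆ = -ψ ⁅x, y⁆ := by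
    calc
      _ = fstar ψ ⁅x, y⁆ := by simp [fstar, star_lie, ← h]
      _ = -ψ ⁅x, y⁆ := congrFun hψ _
  have hD : (fun x => Dd ψ (star x)) =
      ∑ i, (tripleCommutator (b i) (φ i) + tripleCommutator (star (b i)) (dualAdjoint (φ i))) := by
    ext x y
    simp only [Dd_apply, Finset.sum_apply, Pi.add_apply, tripleCommutator_add_star_apply,
      LinearMap.sub_apply, ← Finset.mul_sum, Finset.sum_sub_distrib, h, hψ']
    ring
  rw [hD]
  exact sum_mem fun i _ => add_mem (tripleCommutator_mem_innerTripleDerivations _ _)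
    (tripleCommutator_mem_innerTripleDerivations _ _)

/-- For `M = M_n(ℂ)` and `ψ ∈ M*` with `ψ* = -ψ`, the map `x ↦ D_ψ(x*)` is an inner
triple derivation: `D_ψ∘* = Σ_j (L(b_j,φ_j) - L(φ_j,b_j))` for some `b_j ∈ M`,
`φ_j ∈ M*`. -/
theorem matrix_skew_inner_derivation_is_inner_triple (n : ℕ) (hn : 1 ≤ n)
    (ψ : Module.Dual ℂ (Mat n)) (hψ : fstar ⇑ψ = -⇑ψ) :
    ∃ (m : ℕ) (bs : Fin m → Mat n) (φs : Fin m → Module.Dual ℂ (Mat n)),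
      ∀ x : Mat n,
        Dd ⇑ψ (star x) = ∑ i, (tMid (bs i) ⇑(φs i) x - tOut x (bs i) ⇑(φs i)) := by
  have hn' : (n : ℂ) ≠ 0 := Nat.cast_ne_zero.mpr (Nat.one_le_iff_ne_zero.mp hn)
  have hsum (x y : Mat n) :
      ∑ p : Fin n × Fin n, ⁅Matrix.single p.2 p.1 (1 : ℂ),
        (-(n : ℂ)⁻¹ • ψ) ∘ₗ LinearMap.mulLeft ℂ (Matrix.single p.1 p.2 (1 : ℂ))⁆ ⁅x, y⁆ =
      ψ ⁅x, y⁆ := by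
    rw [sum_lie_single_comp_mulLeft_apply_lie]
    simp [hn']
  have hmem := Dd_star_mem_innerTripleDerivations_of_sum_lie_eq hψ hsum
  obtain ⟨m, bs, φs, hD⟩ := exists_sum_of_mem_innerTripleDerivations hmem
  exact ⟨m, bs, φs, fun x => (congrFun hD x).trans (Finset.sum_apply _ _ _)⟩
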